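/- For every m ≥ 2t, the Berlekamp–Massey algorithm satisfies f^(m) = f^e and φ^(m) = φ^e; that is, the algorithm computes the error locator and error evaluator polynomials after 2t iterations. -/

import Mathlib

open Polynomial
open scoped Classical

noncomputable section

variable {F : Type*} [Field F]

/-- The coefficient of `x^a` in the Laurent expansion of the rational function `h`
in `1/x` (i.e. the expansion at infinity): substituting `x = 1/t`, the rational
function `h(1/t)` equals `t^(deg denom - deg num) * reverse(num)(t)/reverse(denom)(t)`,
and we take the coefficient of `t^(-a)` in its Laurent expansion at `t = 0`. -/
def coeffAtInf (h : RatFunc F) (a : ℤ) : F :=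
  let v : RatFunc F :=
    (RatFunc.X : RatFunc F) ^ ((h.denom.natDegree : ℤ) - (h.num.natDegree : ℤ)) *
      (algebraMap (Polynomial F) (RatFunc F) h.num.reverse /
        algebraMap (Polynomial F) (RatFunc F) h.denom.reverse)
  ((v : LaurentSeries F)).coeff (-a)

variable (F) in
/-- The error locator polynomial `f^e`. -/
def errLoc {n : ℕ} (α : Fin n → F) (e : Fin n → F) : Polynomial F :=
  ∏ j ∈ Finset.univ.filter (fun j => e j ≠ 0), (X - C (α j))

variable (F) in
/-- The error evaluator polynomial `φ^e`. -/
def errEval {n : ℕ} (α : Fin n → F) (e : Fin n → F) : Polynomial F :=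
  ∑ j ∈ Finset.univ.filter (fun j => e j ≠ 0),
    C (e j) * ∏ k ∈ (Finset.univ.filter (fun k => e k ≠ 0)).erase j, (X - C (α k))

variable (F) in
/-- The syndrome `S = φ^e/f^e = ∑_j e_j/(x - α_j)` as a rational function. -/
def synd {n : ℕ} (α : Fin n → F) (e : Fin n → F) : RatFunc F :=
  algebraMap (Polynomial F) (RatFunc F) (errEval F α e) /
    algebraMap (Polynomial F) (RatFunc F) (errLoc F α e)

variable (F) in
/-- One step of the Berlekamp--Massey algorithm: the state is the quadruple
`(f^(m), φ^(m), g^(m), ψ^(m))`. -/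
def BMstep (S : RatFunc F) (m : ℕ)
    (st : Polynomial F × Polynomial F × Polynomial F × Polynomial F) :
    Polynomial F × Polynomial F × Polynomial F × Polynomial F :=
  let f := st.1
  let φ := st.2.1
  let g := st.2.2.1
  let ψ := st.2.2.2
  let d : ℕ := f.natDegree
  -- μ is the coefficient of x^(d-m-1) in the Laurent expansion of f^(m)·S in 1/x
  let μ : F := coeffAtInf (algebraMap (Polynomial F) (RatFunc F) f * S) ((d : ℤ) - m - 1)
  let p : ℤ := 2 * d - m - 1
  if μ = 0 ∨ 0 ≤ p then
    (f - C μ * X ^ p.toNat * g, φ - C μ * X ^ p.toNat * ψ, g, ψ)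
  else
    (X ^ (-p).toNat * f - C μ * g, X ^ (-p).toNat * φ - C μ * ψ, C μ⁻¹ * f, C μ⁻¹ * φ)

variable (F) in
/-- The Berlekamp--Massey data `(f^(m), φ^(m), g^(m), ψ^(m))`, initialized at
`(1, 0, 0, -1)`. -/
def BM (S : RatFunc F) : ℕ → Polynomial F × Polynomial F × Polynomial F × Polynomial F
  | 0 => (1, 0, 0, -1)
  | m + 1 => BMstep F S m (BM S m)

end

section BerlekampMassey

variable {F : Type*} [Field F]

/-- The ring homomorphism expanding a polynomial at infinity: substitute the inverse of the
Laurent series variable. -/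
noncomputable def expandAtInf (F : Type*) [Field F] : F[X] →+* LaurentSeries F :=
  eval₂RingHom HahnSeries.C (HahnSeries.single (-1) 1)

lemma eval₂_single_one_eq_coe (P : F[X]) :
    eval₂ (HahnSeries.C : F →+* LaurentSeries F) (HahnSeries.single 1 1) P =
      HahnSeries.ofPowerSeries ℤ F (P : PowerSeries F) := by
  induction P using Polynomial.induction_on' with
  | add p q hp hq => simp [eval₂_add, hp, hq]
  | monomial k a =>
    rw [eval₂_monomial, ← C_mul_X_pow_eq_monomial]
    simp [HahnSeries.ofPowerSeries_C, HahnSeries.ofPowerSeries_X]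

lemma expandAtInf_eq_of_natDegree_le (P : F[X]) {N : ℕ} (hN : P.natDegree ≤ N) :
    expandAtInf F P = HahnSeries.single (-(N : ℤ)) 1 *
      HahnSeries.ofPowerSeries ℤ F (reflect N P : F[X]) := by
  let _ : Invertible (HahnSeries.single (-1) 1 : LaurentSeries F) :=
    ⟨HahnSeries.single 1 1, by simp, by simp⟩
  have h := eval₂_reflect_mul_pow (HahnSeries.C : F →+* LaurentSeries F)
    (HahnSeries.single (-1) 1) N P hN
  rw [show (⅟(HahnSeries.single (-1) 1 : LaurentSeries F)) = HahnSeries.single 1 1 from rfl,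
    eval₂_single_one_eq_coe] at h
  rw [expandAtInf, coe_eval₂RingHom, ← h, mul_comm]
  simp

lemma expandAtInf_ne_zero {P : F[X]} (hP : P ≠ 0) : expandAtInf F P ≠ 0 := by
  rw [expandAtInf_eq_of_natDegree_le P le_rfl]
  refine mul_ne_zero (by simp) ?_
  rw [Ne, map_eq_zero_iff _ HahnSeries.ofPowerSeries_injective, Polynomial.coe_eq_zero_iff]
  exact fun h => hP (reflect_eq_zero_iff.mp h)

lemma coeff_expandAtInf_of_pos (P : F[X]) {k : ℤ} (hk : 0 < k) :
    (expandAtInf F P).coeff k = 0 := by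
  obtain ⟨j, rfl⟩ := Int.eq_ofNat_of_zero_le hk.le
  rw [expandAtInf_eq_of_natDegree_le P le_rfl]
  have h := HahnSeries.coeff_single_mul_add (r := (1 : F)) (x := HahnSeries.ofPowerSeries ℤ F
    (reflect P.natDegree P : F[X])) (a := ((P.natDegree + j : ℕ) : ℤ)) (b := -(P.natDegree : ℤ))
  rw [show ((P.natDegree + j : ℕ) : ℤ) + -(P.natDegree : ℤ) = j by push_cast; ring] at h
  rw [h, HahnSeries.ofPowerSeries_apply_coeff, Polynomial.coeff_coe, one_mul]
  apply coeff_eq_zero_of_natDegree_lt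
  have : (reflect P.natDegree P).natDegree ≤ P.natDegree := reverse_natDegree_le P
  lia

lemma coeffAtInf_eq_coeff_div (N : F[X]) {E : F[X]} (hE : E ≠ 0) (a : ℤ) :
    coeffAtInf (algebraMap F[X] (RatFunc F) N / algebraMap F[X] (RatFunc F) E) a =
      (expandAtInf F N / expandAtInf F E).coeff (-a) := by
  set h : RatFunc F := algebraMap F[X] (RatFunc F) N / algebraMap F[X] (RatFunc F) E with hh
  have hcoe (P : F[X]) : ((algebraMap F[X] (RatFunc F) P : RatFunc F) : LaurentSeries F) =
      HahnSeries.ofPowerSeries ℤ F (P : PowerSeries F) := (RatFunc.coe_coe P).symm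
  have hnum : N * h.denom = h.num * E := by
    apply RatFunc.algebraMap_injective F
    have hE' := RatFunc.algebraMap_ne_zero hE
    have hd' := RatFunc.algebraMap_ne_zero h.denom_ne_zero
    have := RatFunc.num_div_denom h
    rw [hh, div_eq_div_iff hd' hE'] at this
    rw [map_mul, map_mul, ← this]
  have hdiv : expandAtInf F N / expandAtInf F E =
      expandAtInf F h.num / expandAtInf F h.denom := by
    rw [div_eq_div_iff (expandAtInf_ne_zero hE) (expandAtInf_ne_zero h.denom_ne_zero),
      ← map_mul, ← map_mul, hnum]
  rw [hdiv, coeffAtInf]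
  congr 1
  rw [map_mul, map_div₀, hcoe, hcoe, map_zpow₀, RatFunc.coe_X,
    expandAtInf_eq_of_natDegree_le h.num le_rfl, expandAtInf_eq_of_natDegree_le h.denom le_rfl,
    RatFunc.single_zpow (-(h.num.natDegree : ℤ)), RatFunc.single_zpow (-(h.denom.natDegree : ℤ)),
    mul_div_mul_comm, ← zpow_sub₀ (by simp)]
  congr 2
  ring

/-- For `E` monic, the coefficients of `(φ E + A) / E` at infinity in negative degree `a` with
`deg A ≤ a + deg E`. -/
lemma coeffAtInf_mul_add_div {E : F[X]} (hE : E.Monic) (φ A : F[X]) {a : ℤ} (ha : a < 0)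
    (k : ℕ) (hk : (k : ℤ) = a + E.natDegree) (hA : A.natDegree ≤ k) :
    coeffAtInf (algebraMap F[X] (RatFunc F) (φ * E + A) / algebraMap F[X] (RatFunc F) E) a =
      A.coeff k := by
  have hE0 := expandAtInf_ne_zero hE.ne_zero
  rw [coeffAtInf_eq_coeff_div _ hE.ne_zero, map_add, map_mul, add_div,
    mul_div_cancel_right₀ _ hE0, HahnSeries.coeff_add, coeff_expandAtInf_of_pos _ (by lia),
    zero_add]
  set R : PowerSeries F := ((reflect E.natDegree E : F[X]) : PowerSeries F) with hR
  have hR1 : PowerSeries.constantCoeff R = 1 := by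
    rw [hR, Polynomial.constantCoeff_coe, coeff_reflect, revAt_le (Nat.zero_le _)]
    simp [hE.leadingCoeff]
  have hquot : expandAtInf F A / expandAtInf F E = HahnSeries.single (-a) 1 *
      HahnSeries.ofPowerSeries ℤ F ((reflect k A : F[X]) * R⁻¹) := by
    rw [div_eq_iff hE0, expandAtInf_eq_of_natDegree_le A hA,
      expandAtInf_eq_of_natDegree_le E le_rfl, ← hR, mul_mul_mul_comm, ← map_mul,
      mul_assoc (reflect k A : PowerSeries F), PowerSeries.inv_mul_cancel R (by simp [hR1])]
    simp only [HahnSeries.single_mul_single, mul_one]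
    congr 3
    lia
  have h := HahnSeries.coeff_single_mul_add (r := (1 : F)) (x := HahnSeries.ofPowerSeries ℤ F
    ((reflect k A : F[X]) * R⁻¹)) (a := ((0 : ℕ) : ℤ)) (b := -a)
  rw [Nat.cast_zero, zero_add] at h
  rw [hquot, h, one_mul, ← Nat.cast_zero, HahnSeries.ofPowerSeries_apply_coeff,
    PowerSeries.coeff_zero_eq_constantCoeff_apply, map_mul, PowerSeries.constantCoeff_inv, hR1,
    Polynomial.constantCoeff_coe, coeff_reflect, revAt_le (Nat.zero_le _)]
  simp

/-- The loop invariant of the Berlekamp–Massey algorithm for the syndrome `Φ / E`, expressed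
through the polynomials `f Φ - φ E` and `g Φ - ψ E`. -/
structure BMInvariant (Φ E : F[X]) (m : ℕ) (st : F[X] × F[X] × F[X] × F[X]) : Prop where
  monic : st.1.Monic
  natDegree_add_le : st.2.2.1.natDegree + st.1.natDegree ≤ m
  coeff_eq_zero : ∀ k, st.1.natDegree + E.natDegree ≤ k + m →
    (st.1 * Φ - st.2.1 * E).coeff k = 0
  monic_aux : (st.2.2.1 * Φ - st.2.2.2 * E).Monic
  natDegree_aux : (st.2.2.1 * Φ - st.2.2.2 * E).natDegree + st.1.natDegree = E.natDegree

lemma BMInvariant.initial {Φ E : F[X]} (hE : E.Monic) (hΦ : Φ.degree < E.degree) :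
    BMInvariant Φ E 0 (1, 0, 0, -1) where
  monic := monic_one
  natDegree_add_le := by simp
  coeff_eq_zero k hk := by
    have : E.degree ≤ k := natDegree_le_iff_degree_le.mp (by simpa using hk)
    simpa using coeff_eq_zero_of_degree_lt (hΦ.trans_le this)
  monic_aux := by simpa using hE
  natDegree_aux := by simp

/-- A step of the first kind (no swap) preserves the invariant. -/
lemma BMInvariant.update {Φ E f φ g ψ : F[X]} {m p : ℕ}
    (h : BMInvariant Φ E m (f, φ, g, ψ)) (hp : p + m + 1 = 2 * f.natDegree) {μ : F}
    (hμ : ∀ k, k + m + 1 = f.natDegree + E.natDegree → (f * Φ - φ * E).coeff k = μ) :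
    BMInvariant Φ E (m + 1) (f - C μ * X ^ p * g, φ - C μ * X ^ p * ψ, g, ψ) := by
  obtain ⟨hf, hg, hA, hB, hBd⟩ := h
  dsimp only at hf hg hA hB hBd
  have hlt : (C μ * X ^ p * g).degree < f.degree := by
    have h1 : (C μ * X ^ p * g).natDegree ≤ p + g.natDegree :=
      natDegree_mul_le_of_le (natDegree_C_mul_X_pow_le _ _) le_rfl
    exact degree_lt_degree (by lia)
  have hd : (f - C μ * X ^ p * g).natDegree = f.natDegree :=
    natDegree_eq_of_degree_eq (degree_sub_eq_left_of_degree_lt hlt)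
  refine ⟨hf.sub_of_left hlt, ?_, fun k hk => ?_, hB, ?_⟩
  · dsimp only; lia
  · dsimp only at hk ⊢
    rw [hd] at hk
    rw [show (f - C μ * X ^ p * g) * Φ - (φ - C μ * X ^ p * ψ) * E =
      (f * Φ - φ * E) - C μ * (X ^ p * (g * Φ - ψ * E)) by ring, coeff_sub, coeff_C_mul,
      coeff_X_pow_mul', if_pos (by lia)]
    by_cases hk' : k + m + 1 = f.natDegree + E.natDegree
    · rw [hμ k hk', show k - p = (g * Φ - ψ * E).natDegree by lia, coeff_natDegree,
        hB.leadingCoeff, mul_one, sub_self]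
    · rw [hA k (by lia), coeff_eq_zero_of_natDegree_lt (by lia : _ < k - p), mul_zero, sub_self]
  · dsimp only; lia

/-- A step of the second kind (swap) preserves the invariant. -/
lemma BMInvariant.swap {Φ E f φ g ψ : F[X]} {m q : ℕ}
    (h : BMInvariant Φ E m (f, φ, g, ψ)) (hq : q + 2 * f.natDegree = m + 1) {μ : F}
    (hμ0 : μ ≠ 0) {k₀ : ℕ} (hk₀ : k₀ + m + 1 = f.natDegree + E.natDegree)
    (hμ : (f * Φ - φ * E).coeff k₀ = μ) :
    BMInvariant Φ E (m + 1)
      (X ^ q * f - C μ * g, X ^ q * φ - C μ * ψ, C μ⁻¹ * f, C μ⁻¹ * φ) := by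
  obtain ⟨hf, hg, hA, hB, hBd⟩ := h
  dsimp only at hf hg hA hB hBd
  have hXf : (X ^ q * f).Monic := (monic_X_pow q).mul hf
  have hXd : (X ^ q * f).natDegree = q + f.natDegree := by
    rw [(monic_X_pow q).natDegree_mul hf, natDegree_X_pow]
  have hlt : (C μ * g).degree < (X ^ q * f).degree := by
    have h1 : (C μ * g).natDegree ≤ g.natDegree := natDegree_C_mul_le _ _
    exact degree_lt_degree (by lia)
  have hd : (X ^ q * f - C μ * g).natDegree = q + f.natDegree := by
    rw [natDegree_eq_of_degree_eq (degree_sub_eq_left_of_degree_lt hlt), hXd]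
  have hAd : (f * Φ - φ * E).natDegree = k₀ :=
    natDegree_eq_of_le_of_coeff_ne_zero
      (natDegree_le_iff_coeff_eq_zero.mpr fun k hk => hA k (by lia)) (by rwa [hμ])
  have haux : C μ⁻¹ * f * Φ - C μ⁻¹ * φ * E = C μ⁻¹ * (f * Φ - φ * E) := by ring
  refine ⟨hXf.sub_of_left hlt, ?_, fun k hk => ?_, ?_, ?_⟩
  · dsimp only
    rw [hd, natDegree_C_mul (inv_ne_zero hμ0)]
    lia
  · dsimp only at hk ⊢
    rw [hd] at hk
    rw [show (X ^ q * f - C μ * g) * Φ - (X ^ q * φ - C μ * ψ) * E =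
      X ^ q * (f * Φ - φ * E) - C μ * (g * Φ - ψ * E) by ring, coeff_sub, coeff_C_mul,
      coeff_X_pow_mul', if_pos (by lia)]
    by_cases hk' : k = (g * Φ - ψ * E).natDegree
    · rw [show k - q = k₀ by lia, hμ, hk', coeff_natDegree, hB.leadingCoeff, mul_one, sub_self]
    · rw [hA _ (by lia), coeff_eq_zero_of_natDegree_lt (by lia : _ < k), mul_zero, sub_self]
  · dsimp only
    rw [haux, Monic, leadingCoeff_mul, leadingCoeff_C, leadingCoeff, hAd, hμ,
      inv_mul_cancel₀ hμ0]
  · dsimp only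
    rw [haux, hd, natDegree_C_mul (inv_ne_zero hμ0), hAd]
    lia

lemma BMInvariant.step {Φ E : F[X]} (hE : E.Monic) {m : ℕ} {st : F[X] × F[X] × F[X] × F[X]}
    (h : BMInvariant Φ E m st) :
    BMInvariant Φ E (m + 1) (BMstep F (algebraMap F[X] (RatFunc F) Φ /
      algebraMap F[X] (RatFunc F) E) m st) := by
  obtain ⟨f, φ, g, ψ⟩ := st
  have ⟨hf, hg, hA, hB, hBd⟩ := h
  dsimp only at hf hg hA hB hBd
  set μ : F := coeffAtInf (algebraMap F[X] (RatFunc F) f * (algebraMap F[X] (RatFunc F) Φ /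
    algebraMap F[X] (RatFunc F) E)) ((f.natDegree : ℤ) - m - 1) with hμdef
  have hfΦ : algebraMap F[X] (RatFunc F) f * (algebraMap F[X] (RatFunc F) Φ /
      algebraMap F[X] (RatFunc F) E) = algebraMap F[X] (RatFunc F)
        (φ * E + (f * Φ - φ * E)) / algebraMap F[X] (RatFunc F) E := by
    rw [← mul_div_assoc, ← map_mul]
    congr 2
    ring
  have hμ : ∀ k, k + m + 1 = f.natDegree + E.natDegree → (f * Φ - φ * E).coeff k = μ := by
    intro k hk
    rw [hμdef, hfΦ, coeffAtInf_mul_add_div hE _ _ (by lia) k (by lia)]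
    exact natDegree_le_iff_coeff_eq_zero.mpr fun j hj => hA j (by lia)
  have hμ0 : f.natDegree + E.natDegree < m + 1 → μ = 0 := by
    intro hlt
    have hA0 : f * Φ - φ * E = 0 := by
      ext k
      exact hA k (by lia)
    rw [hμdef, hfΦ, hA0, coeffAtInf_eq_coeff_div _ hE.ne_zero, add_zero, map_mul,
      mul_div_cancel_right₀ _ (expandAtInf_ne_zero hE.ne_zero)]
    exact coeff_expandAtInf_of_pos _ (by lia)
  by_cases hc : μ = 0 ∨ 0 ≤ 2 * (f.natDegree : ℤ) - m - 1
  · simp only [BMstep, ← hμdef, if_pos hc]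
    rcases le_or_gt 0 (2 * (f.natDegree : ℤ) - m - 1) with hp | hp
    · exact h.update (by lia) hμ
    · have h0 : μ = 0 := hc.resolve_right (by lia)
      simp only [h0, map_zero, zero_mul, sub_zero]
      refine ⟨hf, by dsimp only; lia, fun k hk => ?_, hB, hBd⟩
      dsimp only at hk ⊢
      by_cases hk' : k + m + 1 = f.natDegree + E.natDegree
      · rw [hμ k hk', h0]
      · exact hA k (by lia)
  · simp only [BMstep, ← hμdef, if_neg hc]
    push Not at hc
    have hle : m + 1 ≤ f.natDegree + E.natDegree := by
      by_contra hlt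
      exact hc.1 (hμ0 (by lia))
    obtain ⟨k₀, hk₀⟩ := Nat.exists_eq_add_of_le' hle
    exact h.swap (by lia) hc.1 (k₀ := k₀) (by lia) (hμ k₀ (by lia))

lemma BMInvariant.of_BM {Φ E : F[X]} (hE : E.Monic) (hΦ : Φ.degree < E.degree) (m : ℕ) :
    BMInvariant Φ E m (BM F (algebraMap F[X] (RatFunc F) Φ /
      algebraMap F[X] (RatFunc F) E) m) := by
  induction m with
  | zero => exact .initial hE hΦ
  | succ m ih => exact ih.step hE

/-- Once `2 deg E ≤ m`, the invariant forces `(f, φ)` to be the reduced fraction `(E, Φ)`. -/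
lemma BMInvariant.eq_of_two_mul_le {Φ E : F[X]} (hE : E.Monic) (hcop : IsCoprime E Φ) {m : ℕ}
    {st : F[X] × F[X] × F[X] × F[X]} (h : BMInvariant Φ E m st) (hm : 2 * E.natDegree ≤ m) :
    st.1 = E ∧ st.2.1 = Φ := by
  have hd := h.natDegree_aux
  have h0 : st.1 * Φ = st.2.1 * E := by
    rw [← sub_eq_zero]
    ext k
    exact h.coeff_eq_zero k (by lia)
  have hf : st.1 = E := eq_of_monic_of_dvd_of_natDegree_le hE h.monic
    (hcop.dvd_of_dvd_mul_right (h0 ▸ dvd_mul_left E _)) (by lia)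
  refine ⟨hf, ?_⟩
  rw [hf, mul_comm] at h0
  exact (mul_right_cancel₀ hE.ne_zero h0).symm

lemma errLoc_monic {n : ℕ} (α e : Fin n → F) : (errLoc F α e).Monic :=
  monic_prod_of_monic _ _ fun _ _ => monic_X_sub_C _

open scoped Classical in
lemma natDegree_errLoc {n : ℕ} (α e : Fin n → F) :
    (errLoc F α e).natDegree = (Finset.univ.filter (fun j => e j ≠ 0)).card :=
  natDegree_finsetProd_X_sub_C_eq_card _ _

lemma degree_errEval_lt {n : ℕ} (α e : Fin n → F) :
    (errEval F α e).degree < (errLoc F α e).degree := by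
  rw [degree_eq_natDegree (errLoc_monic α e).ne_zero, natDegree_errLoc, errEval,
    degree_lt_iff_coeff_zero]
  intro k hk
  rw [finsetSum_coeff]
  refine Finset.sum_eq_zero fun j hj => ?_
  rw [coeff_C_mul, coeff_eq_zero_of_natDegree_lt, mul_zero]
  rw [natDegree_finsetProd_X_sub_C_eq_card]
  exact (Finset.card_erase_lt_of_mem hj).trans_le hk

lemma isCoprime_errLoc_errEval {n : ℕ} {α : Fin n → F} (hα : Function.Injective α)
    (e : Fin n → F) : IsCoprime (errLoc F α e) (errEval F α e) := by
  refine IsCoprime.prod_left fun j hj => ?_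
  refine (irreducible_X_sub_C (α j)).coprime_iff_not_dvd.mpr fun hdvd => ?_
  rw [dvd_iff_isRoot, IsRoot.def, errEval, eval_finsetSum, Finset.sum_eq_single_of_mem j hj,
    eval_mul, eval_C, eval_prod, mul_eq_zero] at hdvd
  · rcases hdvd with h | h
    · exact (Finset.mem_filter.mp hj).2 h
    · obtain ⟨k, hk, hk0⟩ := Finset.prod_eq_zero_iff.mp h
      rw [eval_sub, eval_X, eval_C, sub_eq_zero] at hk0
      exact Finset.ne_of_mem_erase hk (hα hk0).symm
  · intro i _ hij
    rw [eval_mul, eval_prod, Finset.prod_eq_zero (Finset.mem_erase.mpr ⟨hij.symm, hj⟩) (by simp),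
      mul_zero]

end BerlekampMassey

open scoped Classical in
/-- For `m ≥ 2t`, the Berlekamp--Massey algorithm has computed the error locator
and error evaluator polynomials: `f^(m) = f^e` and `φ^(m) = φ^e`. -/
theorem berlekamp_massey_terminates {F : Type*} [Field F] [Fintype F] {n : ℕ}
    (α : Fin n → F) (hα : Function.Injective α) (e : Fin n → F)
    (t : ℕ) (ht : t = (Finset.univ.filter (fun j => e j ≠ 0)).card)
    (S : RatFunc F) (hS : S = synd F α e) (m : ℕ) (hm : 2 * t ≤ m) :
    (BM F S m).1 = errLoc F α e ∧ (BM F S m).2.1 = errEval F α e := by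
  subst hS
  exact (BMInvariant.of_BM (errLoc_monic α e) (degree_errEval_lt α e) m).eq_of_two_mul_le
    (errLoc_monic α e) (isCoprime_errLoc_errEval hα e) (by rwa [natDegree_errLoc, ← ht])
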